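/- Let f_1 be a self-usage utility function, let β > 0, and let 0 < p_a < p_b < f_1'(0), with q_a = (1+β)·p_a. Let s_{1a}, s_{1b} ∈ (0,1) satisfy f_1'(1−s_{1a}) = p_a and f_1'(1−s_{1b}) = p_b (so s_{1a} < s_{1b}), and let λ = s_{1a}/s_{1b}. If p_b < p_a·(1 + λ·β), then the sign-up bonus B_a = (p_b − p_a)·s_{1b} − (f_1(1−s_{1a}) − f_1(1−s_{1b}) − p_a·(s_{1b} − s_{1a}))) satisfies: (a) B_a > 0; (b) owner 1 weakly prefers platform a, i.e. f_1(1−s_{1a}) + p_a·s_{1a} + B_a ≥ f_1(1−s_{1b}) + p_b·s_{1b}; and (c) platform a's revenue is strictly positive: (q_a − p_a)·s_{1a} − B_a = q_a·s_{1a} − p_b·s_{1b} + f_1(1−s_{1a}) − f_1(1−s_{1b}) > 0. -/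

import Mathlib

/-- A self-usage utility function `f` with derivative `f'`:
differentiable on `[0,1]`, strictly increasing on `[0,1]`,
strictly concave on `[0,1]` (with `f'` strictly decreasing), and `f' 1 = 0`. -/
def SelfUsage (f f' : ℝ → ℝ) : Prop :=
  (∀ x ∈ Set.Icc (0:ℝ) 1, HasDerivWithinAt f (f' x) (Set.Icc (0:ℝ) 1) x) ∧
  StrictMonoOn f (Set.Icc (0:ℝ) 1) ∧
  StrictConcaveOn ℝ (Set.Icc (0:ℝ) 1) f ∧
  StrictAntiOn f' (Set.Icc (0:ℝ) 1) ∧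
  f' 1 = 0

/-!
Let `V p` be the maximum of `f (1 - σ) + p * σ` over `σ ∈ [0, 1]`; as `f` is concave, it is attained
wherever `f' (1 - σ) = p`. The bonus `Ba` is therefore exactly `V pb - V pa`, so it makes
the owner indifferent between the platforms. Keeping the sharing level fixed while the price changes
(the envelope argument) bounds it on both sides:
`(pb - pa) * s1a ≤ Ba ≤ (pb - pa) * s1b`. The lower bound is positive, and the condition on `pb`
says that the upper bound is less than the commission `β * pa * s1a`.
-/

open Set

/-- The utility, before any bonus, of an owner who shares `σ` of a unit of time at the supplier
price `p` and uses the rest; its maximizers in `σ` are the owner's optimal sharing levels. -/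
def sharingUtility (f : ℝ → ℝ) (p σ : ℝ) : ℝ :=
  f (1 - σ) + p * σ

theorem le_tangent_of_concaveOn {S : Set ℝ} {f : ℝ → ℝ} {m x y : ℝ} (hf : ConcaveOn ℝ S f)
    (hx : x ∈ S) (hy : y ∈ S) (hm : HasDerivWithinAt f m S x) :
    f y ≤ f x + m * (y - x) := by
  rcases lt_trichotomy x y with hxy | rfl | hyx
  · have hslope := hf.slope_le_of_hasDerivWithinAt hx hy hxy hm
    rw [slope_def_field, div_le_iff₀ (sub_pos.2 hxy)] at hslope
    linarith
  · simp
  · have hslope := hf.le_slope_of_hasDerivWithinAt hy hx hyx hm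
    rw [slope_def_field, le_div_iff₀ (sub_pos.2 hyx)] at hslope
    linarith

theorem SelfUsage.isMaxOn_sharingUtility {f f' : ℝ → ℝ} (hf : SelfUsage f f') {p s : ℝ}
    (hs : s ∈ Icc (0 : ℝ) 1) (hp : f' (1 - s) = p) :
    IsMaxOn (sharingUtility f p) (Icc 0 1) s := by
  obtain ⟨hderiv, -, hconcave, -, -⟩ := hf
  have hs' : 1 - s ∈ Icc (0 : ℝ) 1 := Icc.mem_iff_one_sub_mem.1 hs
  refine isMaxOn_iff.2 fun σ hσ => ?_
  have htangent : f (1 - σ) ≤ f (1 - s) + p * ((1 - σ) - (1 - s)) :=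
    le_tangent_of_concaveOn hconcave.concaveOn hs' (Icc.mem_iff_one_sub_mem.1 hσ)
      (hp ▸ hderiv _ hs')
  unfold sharingUtility
  linarith

section OptimalSharing

variable {S : Set ℝ} {f : ℝ → ℝ} {p q s t : ℝ}

theorem sub_mul_le_sharingUtility_sub (hs : s ∈ S) (ht : IsMaxOn (sharingUtility f q) S t) :
    (q - p) * s ≤ sharingUtility f q t - sharingUtility f p s :=
  calc
    (q - p) * s = sharingUtility f q s - sharingUtility f p s := by unfold sharingUtility; ring
    _ ≤ sharingUtility f q t - sharingUtility f p s := sub_le_sub_right (isMaxOn_iff.1 ht s hs) _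

theorem sharingUtility_sub_le_sub_mul (hs : IsMaxOn (sharingUtility f p) S s) (ht : t ∈ S) :
    sharingUtility f q t - sharingUtility f p s ≤ (q - p) * t := by
  linarith [sub_mul_le_sharingUtility_sub (p := q) ht hs]

theorem optimal_sharing_le_of_price_lt (hpq : p < q) (hsS : s ∈ S) (htS : t ∈ S)
    (hs : IsMaxOn (sharingUtility f p) S s) (ht : IsMaxOn (sharingUtility f q) S t) :
    s ≤ t :=
  le_of_mul_le_mul_left
    ((sub_mul_le_sharingUtility_sub hsS ht).trans (sharingUtility_sub_le_sub_mul hs htS))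
    (sub_pos.2 hpq)

end OptimalSharing

theorem price_gap_mul_lt_commission {β p q s t : ℝ} (ht : 0 < t)
    (h : q < p * (1 + (s / t) * β)) : (q - p) * t < β * p * s :=
  calc
    (q - p) * t < (p * (1 + (s / t) * β) - p) * t := by gcongr
    _ = β * p * s := by field_simp; ring

theorem signup_bonus_positive_revenue_general
    {S : Set ℝ} {f : ℝ → ℝ} {β pa pb qa s1a s1b Ba : ℝ}
    (hab : pa < pb) (hqa : qa = (1 + β) * pa)
    (hs1a : s1a ∈ S) (hs1b : s1b ∈ S) (hs1a_pos : 0 < s1a)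
    (hmaxa : IsMaxOn (sharingUtility f pa) S s1a) (hmaxb : IsMaxOn (sharingUtility f pb) S s1b)
    (hlam : pb < pa * (1 + (s1a / s1b) * β))
    (hBa : Ba = (pb - pa) * s1b - (f (1 - s1a) - f (1 - s1b) - pa * (s1b - s1a))) :
    0 < Ba ∧
    f (1 - s1b) + pb * s1b ≤ f (1 - s1a) + pa * s1a + Ba ∧
    (qa - pa) * s1a - Ba = qa * s1a - pb * s1b + f (1 - s1a) - f (1 - s1b) ∧
    0 < (qa - pa) * s1a - Ba := by
  have hBa_eq : Ba = sharingUtility f pb s1b - sharingUtility f pa s1a := by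
    rw [hBa]; unfold sharingUtility; ring
  have hlower : (pb - pa) * s1a ≤ Ba := hBa_eq ▸ sub_mul_le_sharingUtility_sub hs1a hmaxb
  have hupper : Ba ≤ (pb - pa) * s1b := hBa_eq ▸ sharingUtility_sub_le_sub_mul hmaxa hs1b
  have hs1b_pos : 0 < s1b :=
    hs1a_pos.trans_le (optimal_sharing_le_of_price_lt hab hs1a hs1b hmaxa hmaxb)
  have hcommission : (qa - pa) * s1a = β * pa * s1a := by rw [hqa]; ring
  refine ⟨(mul_pos (sub_pos.2 hab) hs1a_pos).trans_le hlower, ?_, ?_, ?_⟩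
  · linarith
  · linarith
  · linarith [price_gap_mul_lt_commission hs1b_pos hlam]

/-- if p_b < p_a(1 + λβ), the stated sign-up bonus is positive,
attracts owner 1 to platform a, and leaves platform a strictly positive
revenue. -/
theorem signup_bonus_positive_revenue
    (f f' : ℝ → ℝ) (hf : SelfUsage f f')
    (β pa pb : ℝ) (hβ : 0 < β) (hpa : 0 < pa) (hab : pa < pb) (hbf : pb < f' 0)
    (qa : ℝ) (hqa : qa = (1 + β) * pa)
    (s1a s1b : ℝ) (hs1a : s1a ∈ Set.Ioo (0:ℝ) 1) (hs1b : s1b ∈ Set.Ioo (0:ℝ) 1)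
    (hda : f' (1 - s1a) = pa) (hdb : f' (1 - s1b) = pb)
    (hlam : pb < pa * (1 + (s1a / s1b) * β))
    (Ba : ℝ)
    (hBa : Ba = (pb - pa) * s1b - (f (1 - s1a) - f (1 - s1b) - pa * (s1b - s1a))) :
    0 < Ba ∧
    f (1 - s1b) + pb * s1b ≤ f (1 - s1a) + pa * s1a + Ba ∧
    (qa - pa) * s1a - Ba = qa * s1a - pb * s1b + f (1 - s1a) - f (1 - s1b) ∧
    0 < (qa - pa) * s1a - Ba :=
  have ha := Ioo_subset_Icc_self hs1a
  have hb := Ioo_subset_Icc_self hs1b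
  signup_bonus_positive_revenue_general hab hqa ha hb hs1a.1
    (hf.isMaxOn_sharingUtility ha hda) (hf.isMaxOn_sharingUtility hb hdb) hlam hBa
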